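/- arXiv:2506.17992 — 7 statements merged into one kernel-verified Lean document; each statement's English description precedes it below -/
import Mathlib

section
/- Let p = π/2, let y be a nonzero real number with y/p not an integer, and let p' be a positive real number with p·p' > 2.4. Set σ = |p − p'|. If y/p' − ⌊y/p'⌋ < 1/2, σ < (2.4/|y|)·(y/p' − ⌊y/p'⌋), and σ < (2.4/|y|)·(1/2 + ⌊y/p'⌋ − y/p'), then ⌊y/p⌋ = ⌊y/p'⌋ and y/p − ⌊y/p⌋ < 1/2. -/
/-!
Since `y / p - y / p' = y (p' - p) / (p p')` and `p p' > 2.4`, the quotients differ by at most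
`|y| σ / 2.4`. The two bounds on `σ` say that this is smaller than both the distance from `y / p'`
down to `⌊y / p'⌋` and the distance up to `⌊y / p'⌋ + 1 / 2`, so `y / p` lies strictly between
these two points.
-/

open Real

theorem floor_eq_and_fract_lt_half (y : ℝ) (hy : y ≠ 0) (p : ℝ) (hp : p = Real.pi / 2)
    (hnotint : ∀ k : ℤ, y / p ≠ (k : ℝ))
    (p' : ℝ) (hp' : 0 < p') (hpp' : p * p' > 2.4)
    (σ : ℝ) (hσ : σ = |p - p'|)
    (hhalf : y / p' - ⌊y / p'⌋ < 1 / 2)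
    (h1 : σ < (2.4 / |y|) * (y / p' - ⌊y / p'⌋))
    (h2 : σ < (2.4 / |y|) * (1 / 2 + ⌊y / p'⌋ - y / p')) :
    ⌊y / p⌋ = ⌊y / p'⌋ ∧ y / p - ⌊y / p⌋ < 1 / 2 := by
  have hp0 : 0 < p := hp ▸ by positivity
  have hy0 : 0 < |y| := abs_pos.mpr hy
  -- The identity `y / p - y / p' = y (p' - p) / (p p')` and `p p' > 2.4` give the error bound.
  have hkey : |y / p - y / p'| ≤ |y| * σ / 2.4 := by
    have hdiff : y / p - y / p' = y * (p' - p) / (p * p') := by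
      field_simp
    rw [hdiff, abs_div, abs_mul, abs_sub_comm, ← hσ, abs_of_pos (mul_pos hp0 hp')]
    have hσ0 : 0 ≤ σ := hσ ▸ abs_nonneg _
    gcongr
  have hscale : ∀ t : ℝ, σ < (2.4 / |y|) * t → |y| * σ / 2.4 < t := by
    intro t ht
    rw [div_mul_eq_mul_div, lt_div_iff₀ hy0] at ht
    rw [div_lt_iff₀ (by norm_num)]
    linarith
  have hlow := hscale _ h1
  have hupp := hscale _ h2
  obtain ⟨hl, hu⟩ := abs_le.mp hkey
  have hfloor : ⌊y / p⌋ = ⌊y / p'⌋ := by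
    rw [Int.floor_eq_iff]
    constructor <;> linarith
  refine ⟨hfloor, ?_⟩
  rw [hfloor]
  linarith
end

section
/- Let p = π/2, let y be a nonzero rational number, let m₀ be a natural number, and let (p_i)_{i≥0} be a sequence of positive real numbers with |p − p_i| ≤ 10^{−(m₀+i)} for all i. Set t_i = y/p_i − ⌊y/p_i⌋. Then there exists an index i such that either 2.4·10^{m₀+i}·min{t_i, 1/2 − t_i} ≥ |y| or 2.4·10^{m₀+i}·min{1 − t_i, t_i − 1/2} ≥ |y|. In other words, the two inequalities 2.4·10^{m₀+i}·min{t_i, 1/2 − t_i} < |y| and 2.4·10^{m₀+i}·min{1 − t_i, t_i − 1/2} < |y| cannot both hold for every i. -/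
open Real

/-!
Since `p i → π / 2`, the quotients `y / p i` converge to `y / (π / 2)`, which is irrational. The
fractional part is continuous at non-integers, so `t i` converges to an irrational `T ∈ (0, 1)`;
in particular `T ≠ 1 / 2`. According to whether `T < 1 / 2` or `T > 1 / 2`, one of the two minima
has a positive limit, and its product with `10 ^ (m₀ + i)` tends to infinity, so it eventually
exceeds `|y|`.
-/

open Filter Topology in
theorem algorithm_terminates (y : ℚ) (hy : y ≠ 0) (m₀ : ℕ)
    (p : ℕ → ℝ) (hppos : ∀ i, 0 < p i)
    (hp : ∀ i, |Real.pi / 2 - p i| ≤ 1 / 10 ^ (m₀ + i))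
    (t : ℕ → ℝ) (ht : ∀ i, t i = (y : ℝ) / p i - ⌊(y : ℝ) / p i⌋) :
    ∃ i : ℕ,
      2.4 * 10 ^ (m₀ + i) * min (t i) (1 / 2 - t i) ≥ |(y : ℝ)| ∨
      2.4 * 10 ^ (m₀ + i) * min (1 - t i) (t i - 1 / 2) ≥ |(y : ℝ)| := by
  have hpow : Tendsto (fun i : ℕ => (10 : ℝ) ^ (m₀ + i)) atTop atTop :=
    (tendsto_pow_atTop_atTop_of_one_lt (by norm_num)).comp
      (tendsto_atTop_mono (fun i => Nat.le_add_left i m₀) tendsto_id)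
  have hplim : Tendsto p atTop (𝓝 (π / 2)) := by
    rw [tendsto_iff_dist_tendsto_zero]
    refine squeeze_zero (fun _ => dist_nonneg) (fun i => ?_) hpow.inv_tendsto_atTop
    rw [dist_comm, Real.dist_eq]
    simpa using hp i
  have hirr : Irrational ((y : ℝ) / (π / 2)) := by
    have h2 : Irrational (π / 2) := by
      simpa using irrational_pi.div_natCast (m := 2) (by norm_num)
    exact h2.ratCast_div hy
  have hfract : Irrational (Int.fract ((y : ℝ) / (π / 2))) := hirr.sub_intCast _
  have htlim : Tendsto t atTop (𝓝 (Int.fract ((y : ℝ) / (π / 2)))) := by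
    have hne : (y : ℝ) / (π / 2) ≠ ⌊(y : ℝ) / (π / 2)⌋ := hirr.ne_int _
    have hq : Tendsto (fun i => (y : ℝ) / p i) atTop (𝓝 ((y : ℝ) / (π / 2))) :=
      tendsto_const_nhds.div hplim (by positivity)
    exact ((continuousAt_fract hne).tendsto.comp hq).congr fun i => (ht i).symm
  have hpos : 0 < Int.fract ((y : ℝ) / (π / 2)) :=
    lt_of_le_of_ne (Int.fract_nonneg _) (by simpa using (hfract.ne_int 0).symm)
  have hlt := Int.fract_lt_one ((y : ℝ) / (π / 2))
  have hhalf : Int.fract ((y : ℝ) / (π / 2)) ≠ 1 / 2 := by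
    simpa using hfract.ne_rat (1 / 2)
  generalize Int.fract ((y : ℝ) / (π / 2)) = T at *
  have hscale : Tendsto (fun i : ℕ => (2.4 : ℝ) * 10 ^ (m₀ + i)) atTop atTop :=
    hpow.const_mul_atTop (by norm_num)
  rcases lt_or_gt_of_ne hhalf with h | h
  · have hmin := htlim.min (htlim.const_sub (1 / 2))
    obtain ⟨i, hi⟩ := ((hscale.atTop_mul_pos (lt_min hpos (by linarith)) hmin).eventually_ge_atTop
      |(y : ℝ)|).exists
    exact ⟨i, Or.inl hi⟩
  · have hmin := (htlim.const_sub 1).min (htlim.sub_const (1 / 2))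
    obtain ⟨i, hi⟩ := ((hscale.atTop_mul_pos (lt_min (by linarith) (by linarith)) hmin).eventually_ge_atTop
      |(y : ℝ)|).exists
    exact ⟨i, Or.inr hi⟩
end

section
/- Let y be a nonzero real number, let r be a positive integer, let p' be a positive real number with |π/2 − p'| < 1/((|y|/1.5 + 1)·10^{r+1}), let k₀ be an even integer with |k₀| < |y|/1.5 + 1, and let n be a natural number with |y − k₀·p'|^{n+1}/(n+1)! < 1/10^{r+1}. Then |sin y − (−1)^{k₀/2}·P_n(y − k₀·p')| < 1/10^r. -/
/-!
Put `x = y - k₀ p'` and `z = y - k₀ π/2`. Since `k₀` is even, `z` differs from `y` by an integer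
multiple of `π`, so `sin y = (-1)^(k₀/2) sin z`, and it suffices to compare `sin z` with `P_n(x)`.
The triangle inequality splits this into two errors, each below `10^-(r+1)`:

* `|sin z - sin x| ≤ |z - x| = |k₀| |π/2 - p'|`, as sine is 1-Lipschitz (`Real.abs_sin_sub_sin_le`);
* `|sin x - P_n(x)| ≤ |x|^(n+1)/(n+1)!`, the Lagrange remainder (`abs_sin_sub_sinTaylor_le`).

Their sum is below `2/10^(r+1) < 1/10^r`.
-/

open Real

/-- Taylor polynomial of sine: `P n y = ∑_{m=0}^{⌊(n-1)/2⌋} (-1)^m y^(2m+1)/(2m+1)!`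
(empty sum when `n = 0`). -/
noncomputable def sinTaylor (n : ℕ) (y : ℝ) : ℝ :=
  ∑ m ∈ Finset.range ((n + 1) / 2),
    (-1 : ℝ) ^ m * y ^ (2 * m + 1) / (Nat.factorial (2 * m + 1))

/-- `sinTaylor n` is the full degree-`n` Maclaurin polynomial: the even-order terms vanish. -/
lemma sum_iteratedDeriv_sin_eq_sinTaylor (n : ℕ) (x : ℝ) :
    ∑ k ∈ Finset.range (n + 1), ((k.factorial : ℝ)⁻¹ * x ^ k) * iteratedDeriv k Real.sin 0 =
      sinTaylor n x := by
  induction n with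
  | zero => simp [sinTaylor]
  | succ n ih =>
    rw [Finset.sum_range_succ, ih]
    rcases Nat.even_or_odd' n with ⟨m, rfl | rfl⟩
    · have h1 : (2 * m + 1) / 2 = m := by omega
      have h2 : (2 * m + 1 + 1) / 2 = m + 1 := by omega
      rw [Real.iteratedDeriv_odd_sin, sinTaylor, sinTaylor, h1, h2, Finset.sum_range_succ]
      simp only [Pi.mul_apply, Pi.pow_apply, Pi.neg_apply, Pi.one_apply, Real.cos_zero]
      ring
    · have h1 : (2 * m + 1 + 1) / 2 = m + 1 := by omega
      have h2 : (2 * m + 1 + 1 + 1) / 2 = m + 1 := by omega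
      have h3 : 2 * m + 1 + 1 = 2 * (m + 1) := by ring
      rw [sinTaylor, sinTaylor, h1, h2, h3, Real.iteratedDeriv_even_sin]
      simp

lemma abs_sin_sub_sinTaylor_le (n : ℕ) (x : ℝ) :
    |Real.sin x - sinTaylor n x| ≤ |x| ^ (n + 1) / (n + 1).factorial := by
  rcases eq_or_ne x 0 with rfl | hx
  · simp [sinTaylor]
  obtain ⟨t, -, ht⟩ := taylor_mean_remainder_lagrange_iteratedDeriv (f := Real.sin) (n := n)
    hx.symm Real.contDiff_sin.contDiffOn
  have hT : taylorWithinEval Real.sin n (Set.uIcc 0 x) 0 x = sinTaylor n x := by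
    rw [taylor_within_apply, ← sum_iteratedDeriv_sin_eq_sinTaylor]
    refine Finset.sum_congr rfl fun k _ => ?_
    rw [iteratedDerivWithin_eq_iteratedDeriv (uniqueDiffOn_uIcc hx.symm)
      Real.contDiff_sin.contDiffAt Set.left_mem_uIcc, smul_eq_mul, sub_zero]
  rw [hT, sub_zero] at ht
  rw [ht, abs_div, abs_mul, abs_pow, Nat.abs_cast]
  gcongr
  exact mul_le_of_le_one_left (by positivity) (Real.abs_iteratedDeriv_sin_le_one _ _)

theorem sin_pointwise_accuracy_even (y : ℝ) (hy : y ≠ 0) (r : ℕ) (hr : 1 ≤ r)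
    (p' : ℝ) (hp' : 0 < p')
    (hσ : |Real.pi / 2 - p'| < 1 / ((|y| / 1.5 + 1) * 10 ^ (r + 1)))
    (k₀ : ℤ) (hk₀even : Even k₀) (hk₀ : |(k₀ : ℝ)| < |y| / 1.5 + 1)
    (n : ℕ) (hn : |y - k₀ * p'| ^ (n + 1) / (Nat.factorial (n + 1)) < 1 / 10 ^ (r + 1)) :
    |Real.sin y - (-1 : ℝ) ^ (k₀ / 2) * sinTaylor n (y - k₀ * p')| < 1 / 10 ^ r := by
  obtain ⟨j, rfl⟩ := even_iff_exists_two_mul.mp hk₀even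
  rw [Int.mul_ediv_cancel_left j two_ne_zero]
  set x : ℝ := y - ((2 * j : ℤ) : ℝ) * p' with hx
  have hz : Real.sin y = (-1 : ℝ) ^ j * Real.sin (y - j * Real.pi) := by
    rw [Real.sin_sub_int_mul_pi, ← mul_assoc, ← mul_zpow]
    simp
  have hsign : |(-1 : ℝ) ^ j| = 1 := by simp [abs_zpow]
  rw [hz, ← mul_sub, abs_mul, hsign, one_mul]
  have hA : 0 < |y| / 1.5 + 1 := by positivity
  have hzx : |Real.sin (y - j * Real.pi) - Real.sin x| < 1 / 10 ^ (r + 1) := by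
    calc |Real.sin (y - j * Real.pi) - Real.sin x| ≤ |y - j * Real.pi - x| :=
          Real.abs_sin_sub_sin_le _ _
      _ = |((2 * j : ℤ) : ℝ)| * |Real.pi / 2 - p'| := by
          rw [← abs_mul, ← abs_neg, hx]
          congr 1
          push_cast
          ring
      _ ≤ (|y| / 1.5 + 1) * |Real.pi / 2 - p'| := by gcongr
      _ < (|y| / 1.5 + 1) * (1 / ((|y| / 1.5 + 1) * 10 ^ (r + 1))) := by gcongr
      _ = 1 / 10 ^ (r + 1) := by field_simp
  have hT := (abs_sin_sub_sinTaylor_le n x).trans_lt hn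
  have htri := abs_sub_le (Real.sin (y - j * Real.pi)) (Real.sin x) (sinTaylor n x)
  have hpow : (1 : ℝ) / 10 ^ r = 10 * (1 / 10 ^ (r + 1)) := by
    rw [pow_succ]
    field_simp
  have hpos : (0 : ℝ) < 1 / 10 ^ (r + 1) := by positivity
  linarith
end

section
/- Let y be a nonzero real number, let r be a positive integer, let p' be a positive real number with |π/2 − p'| < 1/((|y|/1.5 + 1)·10^{r+1}), let k₀ be an odd integer with |k₀| < |y|/1.5 + 1, and let n be a natural number with |y − k₀·p'|^{n+1}/(n+1)! < 1/10^{r+1}. Then |sin y − (−1)^{(k₀−1)/2}·Q_n(y − k₀·p')| < 1/10^r. -/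
/-!
Write `k₀ = 2j + 1`. Since `sin y = (-1)^j cos (y - k₀ π/2)`, the error is at most
`|cos (y - k₀ π/2) - cos (y - k₀ p')| + |cos (y - k₀ p') - Q_n (y - k₀ p')|`.
Cosine is 1-Lipschitz, so the first term is at most `|k₀| |π/2 - p'| < 1/10^(r+1)`; the Lagrange
remainder (`abs_cos_sub_cosTaylor_le`) bounds the second by `|y - k₀ p'|^(n+1)/(n+1)!`, which is
also below `1/10^(r+1)`. Finally `2/10^(r+1) < 1/10^r`.
-/


open Real

/-- Taylor polynomial of cosine: `Q n y = ∑_{m=0}^{⌊n/2⌋} (-1)^m y^(2m)/(2m)!`. -/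
noncomputable def cosTaylor (n : ℕ) (y : ℝ) : ℝ :=
  ∑ m ∈ Finset.range (n / 2 + 1),
    (-1 : ℝ) ^ m * y ^ (2 * m) / (Nat.factorial (2 * m))

/-- `cosTaylor n`, which only lists the even-degree terms, is the full Taylor sum of degree `n`
at `0`: the odd derivatives of cosine vanish there. -/
lemma cosTaylor_eq_sum_iteratedDeriv (n : ℕ) (x : ℝ) :
    cosTaylor n x =
      ∑ i ∈ Finset.range (n + 1), iteratedDeriv i cos 0 * x ^ i / (Nat.factorial i) := by
  induction n with
  | zero => simp [cosTaylor]
  | succ n ih =>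
    rw [Finset.sum_range_succ, ← ih]
    unfold cosTaylor
    rcases Nat.even_or_odd' n with ⟨c, rfl | rfl⟩
    · have h1 : (2 * c + 1) / 2 = c := by omega
      have h2 : (2 * c) / 2 = c := by omega
      rw [h1, h2, Real.iteratedDeriv_odd_cos]
      simp
    · have h1 : (2 * c + 1 + 1) / 2 = c + 1 := by omega
      have h2 : (2 * c + 1) / 2 = c := by omega
      have h3 : 2 * c + 1 + 1 = 2 * (c + 1) := by ring
      rw [h1, h2, Finset.sum_range_succ _ (c + 1), h3, Real.iteratedDeriv_even_cos]
      simp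

lemma abs_cos_sub_cosTaylor_le (n : ℕ) (x : ℝ) :
    |cos x - cosTaylor n x| ≤ |x| ^ (n + 1) / (Nat.factorial (n + 1)) := by
  rcases eq_or_ne 0 x with rfl | hx
  · have : cosTaylor n 0 = 1 := by
      unfold cosTaylor
      rw [Finset.sum_range_succ']
      simp
    simp [this]
  · obtain ⟨t, -, ht⟩ := taylor_mean_remainder_lagrange_iteratedDeriv (n := n) hx
      (Real.contDiff_cos.contDiffOn)
    have hT : taylorWithinEval cos n (Set.uIcc 0 x) 0 x = cosTaylor n x := by
      rw [taylor_within_apply, cosTaylor_eq_sum_iteratedDeriv]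
      refine Finset.sum_congr rfl fun i _ => ?_
      rw [iteratedDerivWithin_eq_iteratedDeriv (uniqueDiffOn_uIcc hx)
        Real.contDiff_cos.contDiffAt Set.left_mem_uIcc, smul_eq_mul, sub_zero]
      ring
    rw [← hT, ht, sub_zero, abs_div, abs_mul, abs_pow, Nat.abs_cast]
    gcongr
    exact mul_le_of_le_one_left (by positivity) (Real.abs_iteratedDeriv_cos_le_one _ _)

theorem sin_pointwise_accuracy_odd (y : ℝ) (hy : y ≠ 0) (r : ℕ) (hr : 1 ≤ r)
    (p' : ℝ) (hp' : 0 < p')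
    (hσ : |Real.pi / 2 - p'| < 1 / ((|y| / 1.5 + 1) * 10 ^ (r + 1)))
    (k₀ : ℤ) (hk₀odd : Odd k₀) (hk₀ : |(k₀ : ℝ)| < |y| / 1.5 + 1)
    (n : ℕ) (hn : |y - k₀ * p'| ^ (n + 1) / (Nat.factorial (n + 1)) < 1 / 10 ^ (r + 1)) :
    |Real.sin y - (-1 : ℝ) ^ ((k₀ - 1) / 2) * cosTaylor n (y - k₀ * p')| < 1 / 10 ^ r := by
  obtain ⟨j, rfl⟩ := hk₀odd
  have hj : (2 * j + 1 - 1) / 2 = j := by omega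
  rw [hj]
  set k : ℝ := ((2 * j + 1 : ℤ) : ℝ) with hk
  have hsin : sin y = (-1 : ℝ) ^ j * cos (y - k * (π / 2)) := by
    have e : y = (y - k * (π / 2) + π / 2) + j * π := by
      rw [hk]; push_cast; ring
    conv_lhs => rw [e]
    rw [Real.sin_add_int_mul_pi, Real.sin_add_pi_div_two]
  have hlip : |cos (y - k * (π / 2)) - cos (y - k * p')| < 1 / 10 ^ (r + 1) := by
    have hB : 0 < |y| / 1.5 + 1 := by positivity
    calc |cos (y - k * (π / 2)) - cos (y - k * p')|
        ≤ |(y - k * (π / 2)) - (y - k * p')| := Real.abs_cos_sub_cos_le _ _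
      _ = |k| * |π / 2 - p'| := by
          rw [← abs_mul, ← abs_neg]; congr 1; ring
      _ ≤ (|y| / 1.5 + 1) * |π / 2 - p'| := by gcongr
      _ < (|y| / 1.5 + 1) * (1 / ((|y| / 1.5 + 1) * 10 ^ (r + 1))) := by gcongr
      _ = 1 / 10 ^ (r + 1) := by field_simp
  have htay := (abs_cos_sub_cosTaylor_le n (y - k * p')).trans_lt hn
  have hsign : |(-1 : ℝ) ^ j| = 1 := by simp [abs_zpow]
  rw [hsin, ← mul_sub, abs_mul, hsign, one_mul]
  have htri := abs_sub_le (cos (y - k * (π / 2))) (cos (y - k * p')) (cosTaylor n (y - k * p'))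
  have hpow : (1 : ℝ) / 10 ^ r = 10 * (1 / 10 ^ (r + 1)) := by
    rw [pow_succ]; field_simp
  have hpos : (0 : ℝ) < 1 / 10 ^ (r + 1) := by positivity
  linarith
end

section
/- Let b ≥ 0.8 be a real number, let r ≥ 1 be an integer, and let σ be a real number with 0 ≤ σ < 1/((2b+4)·10^{r+1}). Let p₀ and p₁ be real numbers with |π/2 − p₀| ≤ σ and |π/2 − p₁| ≤ σ, and let k₀ be an integer with 0 ≤ k₀ < b + 1.5. Then |(k₀ + 1/2)·p₀ − (k₀ + 1)·p₁| < 0.8. -/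
/-!
With `p = π/2` one has `(k₀ + 1/2) p - (k₀ + 1) p = -π/4`, and replacing `p` by `p₀` and `p₁`
changes this by at most `(2k₀ + 3/2)σ`. The bounds on `k₀`, `σ` and `b` make this error less than
`0.011`, which fits in the gap between `π/4 < 0.7854` and `0.8`.
-/

open Real

theorem consecutive_interval_estimate (b : ℝ) (hb : 0.8 ≤ b) (r : ℕ) (hr : 1 ≤ r)
    (σ : ℝ) (hσ0 : 0 ≤ σ) (hσ : σ < 1 / ((2 * b + 4) * 10 ^ (r + 1)))
    (p₀ p₁ : ℝ) (hp₀ : |Real.pi / 2 - p₀| ≤ σ) (hp₁ : |Real.pi / 2 - p₁| ≤ σ)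
    (k₀ : ℤ) (hk₀0 : 0 ≤ k₀) (hk₀ : (k₀ : ℝ) < b + 1.5) :
    |((k₀ : ℝ) + 1 / 2) * p₀ - ((k₀ : ℝ) + 1) * p₁| < 0.8 := by
  have hpi : Real.pi < 3.1416 := Real.pi_lt_d4
  have hk : (0 : ℝ) ≤ k₀ := by exact_mod_cast hk₀0
  have hD : (0 : ℝ) < 2 * b + 4 := by norm_num at hb; linarith
  have hpow : (100 : ℝ) ≤ 10 ^ (r + 1) := by
    calc (100 : ℝ) = 10 ^ 2 := by norm_num
      _ ≤ 10 ^ (r + 1) := pow_le_pow_right₀ (by norm_num) (by omega)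
  -- Since `r ≥ 1`, the condition on `σ` yields `(2b + 4)σ < 1/100`.
  have hs : σ * (2 * b + 4) * 100 < 1 := by
    rw [lt_div_iff₀ (by positivity)] at hσ
    have := mul_le_mul_of_nonneg_left hpow (mul_nonneg hσ0 hD.le)
    linarith
  norm_num at hb hk₀ ⊢
  have hbσ : σ * (4 / 5) ≤ σ * b := mul_le_mul_of_nonneg_left hb hσ0
  have hkσ : σ * k₀ ≤ σ * (b + 3 / 2) := mul_le_mul_of_nonneg_left hk₀.le hσ0
  rw [abs_le] at hp₀ hp₁
  have hc₀ : (0 : ℝ) ≤ k₀ + 1 / 2 := by linarith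
  have hc₁ : (0 : ℝ) ≤ k₀ + 1 := by linarith
  have h1 := mul_le_mul_of_nonneg_left hp₀.1 hc₀
  have h2 := mul_le_mul_of_nonneg_left hp₀.2 hc₀
  have h3 := mul_le_mul_of_nonneg_left hp₁.1 hc₁
  have h4 := mul_le_mul_of_nonneg_left hp₁.2 hc₁
  -- Error bound: `(2k₀ + 3/2)σ ≤ (2b + 4)σ + σ/2`, with `σ/2 < 0.001` because `2b + 4 ≥ 5.6`.
  have hpos := Real.pi_pos
  rw [abs_lt]
  constructor <;> nlinarith
end

section
/- Let a, b be real numbers with 0.8 ≤ a < b, let r ≥ 1 be an integer, and let σ be a real number with 0 ≤ σ < 1/((2b+4)·10^{r+1}). Let p₀ and q₀ be real numbers with |π/2 − p₀| ≤ σ and |π/2 − q₀| ≤ σ, and let k₀, n₀ be integers with |a − k₀·p₀| ≤ p₀/2 and |b − n₀·q₀| ≤ q₀/2. Then k₀ ≥ 1, and k₀ ≤ n₀ + 1 (i.e., if k₀ ≥ n₀ then k₀ − n₀ ≤ 1). -/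
open Real

/-!
Since `r ≥ 1` and `b > 0.8`, the bound on `σ` gives `100 σ (2 b + 4) < 1`, hence `σ < 1 / 560`
and `p₀ / 2 < 0.8 ≤ a`, which rules out `k₀ ≤ 0`. If `k₀ ≥ n₀ + 2`, then
`(k₀ - 1/2) p₀ ≤ a < b ≤ (n₀ + 1/2) q₀ ≤ (k₀ - 3/2) q₀`, so
`q₀ < (k₀ - 1/2) (q₀ - p₀) ≤ 2 σ (k₀ - 1/2) ≤ 2 σ b`, using `p₀ ≥ 1` in the last step. The right
side is below `1 / 100`, whereas `q₀ > 1`.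
-/

theorem initial_indices_estimate (a b : ℝ) (ha : 0.8 ≤ a) (hab : a < b)
    (r : ℕ) (hr : 1 ≤ r)
    (σ : ℝ) (hσ0 : 0 ≤ σ) (hσ : σ < 1 / ((2 * b + 4) * 10 ^ (r + 1)))
    (p₀ q₀ : ℝ) (hp₀ : |Real.pi / 2 - p₀| ≤ σ) (hq₀ : |Real.pi / 2 - q₀| ≤ σ)
    (k₀ n₀ : ℤ) (hk₀ : |a - k₀ * p₀| ≤ p₀ / 2) (hn₀ : |b - n₀ * q₀| ≤ q₀ / 2) :
    1 ≤ k₀ ∧ k₀ ≤ n₀ + 1 := by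
  norm_num at ha
  have hb : 4 / 5 < b := by linarith
  have hpow : (100 : ℝ) ≤ 10 ^ (r + 1) := by
    calc (100 : ℝ) = 10 ^ 2 := by norm_num
      _ ≤ 10 ^ (r + 1) := pow_le_pow_right₀ (by norm_num) (by omega)
  have hσb : σ * ((2 * b + 4) * 100) < 1 := by
    rw [lt_div_iff₀ (by positivity)] at hσ
    refine lt_of_le_of_lt ?_ hσ
    gcongr
  have hσb0 : 0 ≤ σ * (b - 4 / 5) := mul_nonneg hσ0 (by linarith)
  have hσs : σ < 1 / 560 := by linarith
  have hpi1 := Real.pi_gt_d2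
  have hpi2 := Real.pi_lt_d4
  norm_num at hpi1 hpi2
  rw [abs_le] at hp₀ hq₀ hk₀ hn₀
  obtain ⟨hp1, hp2⟩ := hp₀
  obtain ⟨hq1, hq2⟩ := hq₀
  obtain ⟨hk1, hk2⟩ := hk₀
  obtain ⟨hn1, hn2⟩ := hn₀
  have hp : 1 < p₀ := by linarith
  have hq : 1 < q₀ := by linarith
  have hk : 1 ≤ k₀ := by
    by_contra! h
    have h' : (k₀ : ℝ) ≤ 0 := by exact_mod_cast Int.lt_add_one_iff.mp h
    have := mul_nonpos_of_nonpos_of_nonneg h' (by linarith : 0 ≤ p₀)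
    linarith
  refine ⟨hk, ?_⟩
  by_contra! h
  have h' : (n₀ : ℝ) + 2 ≤ k₀ := by
    have : n₀ + 2 ≤ k₀ := by omega
    exact_mod_cast this
  have hkR : (1 : ℝ) ≤ k₀ := by exact_mod_cast hk
  have h1 : ((n₀ : ℝ) + 2) * q₀ ≤ k₀ * q₀ := by gcongr
  have h2 : ((k₀ : ℝ) - 1 / 2) * (q₀ - p₀) ≤ (k₀ - 1 / 2) * (2 * σ) :=
    mul_le_mul_of_nonneg_left (by linarith) (by linarith)
  have h3 : ((k₀ : ℝ) - 1 / 2) * 1 ≤ (k₀ - 1 / 2) * p₀ :=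
    mul_le_mul_of_nonneg_left hp.le (by linarith)
  have h4 : ((k₀ : ℝ) - 1 / 2) * (2 * σ) ≤ b * (2 * σ) :=
    mul_le_mul_of_nonneg_right (by linarith) (by linarith)
  linarith
end

section
/- For every real number y and every natural number n, |cos y − (4·Q_n(y/3)³ − 3·Q_n(y/3))| ≤ 4·( |y|^{3n+3}/[3^{n+1}(n+1)!]³ + 3·|y|^{2n+2}/[3^{n+1}(n+1)!]² ) + 5·|y|^{n+1}/(3^n·(n+1)!). -/
/-!
Write `c = cos (y / 3)`, `q = Q_n (y / 3)` and `e = c - q`. By the triple-angle identity the error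
equals `(4 c³ - 3 c) - (4 q³ - 3 q) = 4 e³ - 12 c e² + (12 c² - 3) e`. Taylor's theorem with
Lagrange remainder gives `|e| ≤ E = |y|^(n+1) / (3^(n+1) (n+1)!)` (`abs_cos_sub_cosTaylor_le`).
Since `|c| ≤ 1`, also `|12 c² - 3| ≤ 9 ≤ 15`, so the error is at most `4 (E³ + 3 E²) + 15 E`,
which is the asserted bound because `15 E = 5 |y|^(n+1) / (3^n (n+1)!)`.
-/

open Real

/-- The derivatives of cosine at `0` of odd order vanish, so only the even terms survive in
Mathlib's Taylor polynomial. -/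
lemma taylorWithinEval_cos_eq_cosTaylor {s : Set ℝ} (hs : UniqueDiffOn ℝ s) (h0 : (0 : ℝ) ∈ s)
    (n : ℕ) (x : ℝ) : taylorWithinEval cos n s 0 x = cosTaylor n x := by
  induction n with
  | zero => simp [cosTaylor]
  | succ n ih =>
    rw [taylorWithinEval_succ, ih,
      iteratedDerivWithin_eq_iteratedDeriv hs contDiff_cos.contDiffAt h0]
    obtain ⟨k, rfl | rfl⟩ := n.even_or_odd'
    · have h1 : (2 * k + 1) / 2 = 2 * k / 2 := by omega
      rw [iteratedDeriv_odd_cos]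
      simp [cosTaylor, h1]
    · have h1 : (2 * k + 1 + 1) / 2 = (2 * k + 1) / 2 + 1 := by omega
      have h2 : (2 * k + 1) / 2 + 1 = k + 1 := by omega
      have h3 : 2 * k + 1 + 1 = 2 * (k + 1) := by ring
      unfold cosTaylor
      rw [h1, h2, Finset.sum_range_succ _ (k + 1), h3, iteratedDeriv_even_cos, ← h3,
        Nat.factorial_succ (2 * k + 1)]
      simp
      field_simp

theorem cos_triple_angle_approx_error (y : ℝ) (n : ℕ) :
    |Real.cos y - (4 * (cosTaylor n (y / 3)) ^ 3 - 3 * cosTaylor n (y / 3))| ≤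
      4 * (|y| ^ (3 * n + 3) / ((3 : ℝ) ^ (n + 1) * (Nat.factorial (n + 1))) ^ 3 +
           3 * |y| ^ (2 * n + 2) / ((3 : ℝ) ^ (n + 1) * (Nat.factorial (n + 1))) ^ 2) +
      5 * |y| ^ (n + 1) / ((3 : ℝ) ^ n * (Nat.factorial (n + 1))) := by
  have hE := abs_cos_sub_cosTaylor_le n (y / 3)
  have hcos : cos y = 4 * cos (y / 3) ^ 3 - 3 * cos (y / 3) := by
    rw [← cos_three_mul]; congr 1; ring
  have hc : |cos (y / 3)| ≤ 1 := abs_cos_le_one _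
  rw [abs_div, abs_of_pos (by norm_num : (0 : ℝ) < 3), div_pow, div_div] at hE
  have hF : ((Nat.factorial (n + 1) : ℕ) : ℝ) ≠ 0 := by positivity
  have hrhs : 4 * (|y| ^ (3 * n + 3) / ((3 : ℝ) ^ (n + 1) * (Nat.factorial (n + 1))) ^ 3 +
           3 * |y| ^ (2 * n + 2) / ((3 : ℝ) ^ (n + 1) * (Nat.factorial (n + 1))) ^ 2) +
      5 * |y| ^ (n + 1) / ((3 : ℝ) ^ n * (Nat.factorial (n + 1))) =
      4 * (|y| ^ (n + 1) / ((3 : ℝ) ^ (n + 1) * (Nat.factorial (n + 1)))) ^ 3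
      + 12 * (|y| ^ (n + 1) / ((3 : ℝ) ^ (n + 1) * (Nat.factorial (n + 1)))) ^ 2
      + 15 * (|y| ^ (n + 1) / ((3 : ℝ) ^ (n + 1) * (Nat.factorial (n + 1)))) := by
    have h3 : |y| ^ (3 * n + 3) = (|y| ^ (n + 1)) ^ 3 := by ring
    have h2 : |y| ^ (2 * n + 2) = (|y| ^ (n + 1)) ^ 2 := by ring
    rw [h3, h2, pow_succ (3 : ℝ) n]
    field_simp
    ring
  rw [hrhs, hcos]
  generalize |y| ^ (n + 1) / ((3 : ℝ) ^ (n + 1) * (Nat.factorial (n + 1))) = E at hE ⊢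
  generalize cosTaylor n (y / 3) = q at hE ⊢
  generalize cos (y / 3) = c at hE hc ⊢
  obtain ⟨e, rfl⟩ : ∃ e, q = c - e := ⟨c - q, by ring⟩
  rw [sub_sub_cancel] at hE
  have hc2 : |12 * c ^ 2 - 3| ≤ 15 := by
    have := (sq_le_one_iff_abs_le_one c).2 hc
    rw [abs_le]
    constructor <;> nlinarith [sq_nonneg c]
  have hE0 : 0 ≤ E := (abs_nonneg e).trans hE
  calc |4 * c ^ 3 - 3 * c - (4 * (c - e) ^ 3 - 3 * (c - e))|
      = |4 * e ^ 3 + -(12 * (c * e ^ 2)) + (12 * c ^ 2 - 3) * e| := by congr 1; ring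
    _ ≤ |4 * e ^ 3| + |-(12 * (c * e ^ 2))| + |(12 * c ^ 2 - 3) * e| := abs_add_three _ _ _
    _ = 4 * |e| ^ 3 + 12 * (|c| * |e| ^ 2) + |12 * c ^ 2 - 3| * |e| := by
      simp only [abs_neg, abs_mul, abs_pow, Nat.abs_ofNat]
    _ ≤ 4 * E ^ 3 + 12 * (1 * E ^ 2) + 15 * E := by gcongr
    _ = 4 * E ^ 3 + 12 * E ^ 2 + 15 * E := by rw [one_mul]
end
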